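/- Let q be a complex number with 0 < |q| < 1 and let k ≥ 0 be an integer. Then Σ_{n=0}^∞ q^{2n} / ((q^2;q^2)_{n+k} · (q^2;q^2)_n) = (1/((q^2;q^2)_∞)^2) · Σ_{n=0}^∞ (−1)^n q^{n^2 + n + 2kn}. -/

import Mathlib

/-!
Put `F(x) = ∑ qⁿ (xqⁿ;q)_∞ / (q;q)_n`. Since `(xqⁿ;q)_∞ = (1 - xqⁿ) (xqⁿ⁺¹;q)_∞`, the partial sums
of `F(x) + x F(qx)` telescope to `(xqᴺ⁺¹;q)_∞ / (q;q)_N`, so `F(x) = 1 / (q;q)_∞ - x F(qx)`.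
As `F` is bounded near `0`, iterating this equation expands `F` as
`F(x) = 1 / (q;q)_∞ · ∑ (-x)ⁿ q^(n choose 2)`. At `x = q^(k+1)` the numerators are
`(q^(n+k+1);q)_∞ = (q;q)_∞ / (q;q)_{n+k}`, and replacing `q` by `q²` gives the theorem.
-/

open Finset

/-- Finite q-Pochhammer symbol `(a;q)_n`. -/
noncomputable def qPoch (a q : ℂ) (n : ℕ) : ℂ := ∏ j ∈ Finset.range n, (1 - a * q ^ j)

/-- Infinite q-Pochhammer symbol `(a;q)_∞`. -/
noncomputable def qPochInf (a q : ℂ) : ℂ := ∏' j : ℕ, (1 - a * q ^ j)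

open Filter Topology

lemma eq_sum_add_of_forall_eq_add_mul {R : Type*} [CommSemiring R] {q a c : R} {f : R → R}
    (hf : ∀ x, f x = c + a * x * f (q * x)) (x : R) (n : ℕ) :
    f x = ∑ j ∈ range n, c * (q ^ j.choose 2 * (a * x) ^ j)
      + q ^ n.choose 2 * (a * x) ^ n * f (q ^ n * x) := by
  induction n with
  | zero => simp
  | succ n ih =>
    rw [ih, hf (q ^ n * x), sum_range_succ, Nat.choose_succ_succ', Nat.choose_one_right]
    ring_nf

section NormedField

variable {𝕜 : Type*} [NormedField 𝕜] {q : 𝕜}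

lemma summable_norm_pow_choose_two_mul_pow (hq : ‖q‖ < 1) (x : 𝕜) :
    Summable fun n : ℕ => ‖q ^ n.choose 2 * x ^ n‖ := by
  have ratio_tendsto : Tendsto (fun n : ℕ => ‖q‖ ^ n * ‖x‖) atTop (𝓝 0) := by
    simpa using (tendsto_pow_atTop_nhds_zero_of_lt_one (norm_nonneg q) hq).mul_const ‖x‖
  refine summable_of_ratio_norm_eventually_le one_half_lt_one ?_
  filter_upwards [ratio_tendsto.eventually_le_const one_half_pos] with n hn
  calc ‖‖q ^ (n + 1).choose 2 * x ^ (n + 1)‖‖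
      = ‖q‖ ^ n * ‖x‖ * ‖‖q ^ n.choose 2 * x ^ n‖‖ := by
        simp only [norm_norm, norm_mul, norm_pow, Nat.choose_succ_succ', Nat.choose_one_right]
        ring
    _ ≤ 1 / 2 * ‖‖q ^ n.choose 2 * x ^ n‖‖ := by gcongr

theorem hasSum_of_forall_eq_add_mul (hq : ‖q‖ < 1) {f : 𝕜 → 𝕜} {a c : 𝕜}
    (hf : ∀ x, f x = c + a * x * f (q * x))
    (hf_bdd : (𝓝 0).IsBoundedUnder (· ≤ ·) fun x => ‖f x‖) (x : 𝕜) :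
    HasSum (fun n : ℕ => c * (q ^ n.choose 2 * (a * x) ^ n)) (f x) := by
  have h_summable := summable_norm_pow_choose_two_mul_pow hq (a * x)
  have h_orbit : Tendsto (fun n : ℕ => q ^ n * x) atTop (𝓝 0) := by
    simpa using (tendsto_pow_atTop_nhds_zero_of_norm_lt_one hq).mul_const x
  have h_term : Tendsto (fun n : ℕ => q ^ n.choose 2 * (a * x) ^ n) atTop (𝓝 0) :=
    tendsto_zero_iff_norm_tendsto_zero.mpr h_summable.tendsto_atTop_zero
  have h_remainder : Tendsto (fun n : ℕ => q ^ n.choose 2 * (a * x) ^ n * f (q ^ n * x))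
      atTop (𝓝 0) :=
    h_term.zero_mul_isBoundedUnder_le (h_orbit.isBoundedUnder_comp hf_bdd)
  rw [hasSum_iff_tendsto_nat_of_summable_norm
    (by simpa only [norm_mul c] using h_summable.mul_left ‖c‖)]
  simpa [← eq_sub_of_add_eq (eq_sum_add_of_forall_eq_add_mul hf x _).symm]
    using h_remainder.const_sub (f x)

end NormedField

section Pochhammer

variable {a q : ℂ}

lemma qPoch_zero (a q : ℂ) : qPoch a q 0 = 1 := prod_range_zero _

lemma qPoch_succ (a q : ℂ) (n : ℕ) : qPoch a q (n + 1) = qPoch a q n * (1 - a * q ^ n) :=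
  prod_range_succ _ n

lemma one_sub_mul_pow_ne_zero (ha : ‖a‖ < 1) (hq : ‖q‖ ≤ 1) (n : ℕ) : 1 - a * q ^ n ≠ 0 := by
  refine sub_ne_zero.mpr fun h => ?_
  have h_lt : ‖a * q ^ n‖ < 1 := by
    rw [norm_mul, norm_pow]
    exact mul_lt_one_of_nonneg_of_lt_one_left (norm_nonneg a) ha (pow_le_one₀ (norm_nonneg q) hq)
  simp [← h] at h_lt

lemma qPoch_ne_zero (ha : ‖a‖ < 1) (hq : ‖q‖ ≤ 1) (n : ℕ) : qPoch a q n ≠ 0 :=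
  prod_ne_zero_iff.mpr fun j _ => one_sub_mul_pow_ne_zero ha hq j

lemma hasSum_norm_neg_mul_pow (hq : ‖q‖ < 1) (a : ℂ) :
    HasSum (fun j : ℕ => ‖-(a * q ^ j)‖) (‖a‖ / (1 - ‖q‖)) := by
  simpa only [norm_neg, norm_mul, norm_pow, div_eq_mul_inv] using
    (hasSum_geometric_of_lt_one (norm_nonneg q) hq).mul_left ‖a‖

lemma multipliable_one_sub_mul_pow (hq : ‖q‖ < 1) (a : ℂ) :
    Multipliable fun j : ℕ => 1 - a * q ^ j := by
  simpa only [← sub_eq_add_neg] using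
    multipliable_one_add_of_summable (hasSum_norm_neg_mul_pow hq a).summable

lemma tendsto_qPoch (hq : ‖q‖ < 1) (a : ℂ) : Tendsto (qPoch a q) atTop (𝓝 (qPochInf a q)) :=
  (multipliable_one_sub_mul_pow hq a).tendsto_prod_tprod_nat

lemma qPochInf_ne_zero (ha : ‖a‖ < 1) (hq : ‖q‖ < 1) : qPochInf a q ≠ 0 := by
  simpa only [qPochInf, sub_eq_add_neg] using
    tprod_one_add_ne_zero_of_summable
      (fun j => by simpa only [sub_eq_add_neg] using one_sub_mul_pow_ne_zero ha hq.le j)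
      (hasSum_norm_neg_mul_pow hq a).summable

lemma tendsto_inv_qPoch (ha : ‖a‖ < 1) (hq : ‖q‖ < 1) :
    Tendsto (fun n => (qPoch a q n)⁻¹) atTop (𝓝 (qPochInf a q)⁻¹) :=
  (tendsto_qPoch hq a).inv₀ (qPochInf_ne_zero ha hq)

lemma exists_norm_inv_qPoch_le (ha : ‖a‖ < 1) (hq : ‖q‖ < 1) :
    ∃ C : ℝ, ∀ n, ‖(qPoch a q n)⁻¹‖ ≤ C := by
  obtain ⟨C, hC⟩ :=
    (Metric.isBounded_range_of_tendsto _ (tendsto_inv_qPoch ha hq)).exists_norm_le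
  exact ⟨C, fun n => hC _ ⟨n, rfl⟩⟩

lemma qPoch_mul_qPochInf_mul_pow (hq : ‖q‖ < 1) (a : ℂ) (n : ℕ) :
    qPoch a q n * qPochInf (a * q ^ n) q = qPochInf a q := by
  have h_tail : ∀ j, 1 - a * q ^ n * q ^ j = 1 - a * q ^ (j + n) := fun j => by ring
  have h_mult : Multipliable fun j : ℕ => 1 - a * q ^ (j + n) := by
    simpa only [h_tail] using multipliable_one_sub_mul_pow hq (a * q ^ n)
  simpa only [qPoch, qPochInf, h_tail] using
    h_mult.prod_mul_tprod_nat_mul' (f := fun j => 1 - a * q ^ j)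

lemma qPochInf_eq_one_sub_mul (hq : ‖q‖ < 1) (a : ℂ) :
    qPochInf a q = (1 - a) * qPochInf (a * q) q := by
  simpa [qPoch] using (qPoch_mul_qPochInf_mul_pow hq a 1).symm

lemma norm_qPochInf_sub_one_le (hq : ‖q‖ < 1) (a : ℂ) :
    ‖qPochInf a q - 1‖ ≤ Real.exp (‖a‖ / (1 - ‖q‖)) - 1 := by
  refine le_of_tendsto' ((tendsto_qPoch hq a).sub_const 1).norm fun n => ?_
  have h_sum := hasSum_norm_neg_mul_pow hq a
  calc ‖qPoch a q n - 1‖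
      ≤ Real.exp (∑ j ∈ range n, ‖-(a * q ^ j)‖) - 1 := by
        simpa only [qPoch, sub_eq_add_neg] using
          (range n).norm_prod_one_add_sub_one_le fun j => -(a * q ^ j)
    _ ≤ Real.exp (‖a‖ / (1 - ‖q‖)) - 1 := by
        gcongr
        exact sum_le_hasSum _ (fun j _ => norm_nonneg _) h_sum

lemma norm_qPochInf_le (hq : ‖q‖ < 1) (a : ℂ) :
    ‖qPochInf a q‖ ≤ Real.exp (‖a‖ / (1 - ‖q‖)) := by
  have h_norm := norm_le_norm_add_norm_sub' (qPochInf a q) 1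
  rw [norm_one] at h_norm
  linarith [norm_qPochInf_sub_one_le hq a]

lemma tendsto_qPochInf_nhds_zero (hq : ‖q‖ < 1) :
    Tendsto (fun a => qPochInf a q) (𝓝 0) (𝓝 1) := by
  have h_cont : Continuous fun a : ℂ => Real.exp (‖a‖ / (1 - ‖q‖)) - 1 := by fun_prop
  exact tendsto_iff_norm_sub_tendsto_zero.mpr <|
    squeeze_zero (fun _ => norm_nonneg _) (norm_qPochInf_sub_one_le hq)
      (by simpa using h_cont.tendsto 0)

end Pochhammer

/-- The `q`-series `F(x) = ∑ qⁿ (xqⁿ;q)_∞ / (q;q)_n`, which at `x = q^(k+1)` is `(q;q)_∞` times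
`∑ qⁿ / ((q;q)_{n+k} (q;q)_n)`. Keeping the Pochhammer symbols of `x` in the numerator makes it
meaningful for every `x`. -/
noncomputable def qPochSeries (q x : ℂ) : ℂ :=
  ∑' n : ℕ, q ^ n * qPochInf (x * q ^ n) q / qPoch q q n

section QPochSeries

variable {q : ℂ}

lemma norm_qPochSeries_term_le (hq : ‖q‖ < 1) {C : ℝ} (hC : ∀ n, ‖(qPoch q q n)⁻¹‖ ≤ C)
    (x : ℂ) (n : ℕ) :
    ‖q ^ n * qPochInf (x * q ^ n) q / qPoch q q n‖
      ≤ Real.exp (‖x‖ / (1 - ‖q‖)) * C * ‖q‖ ^ n := by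
  have h_norm_le : ‖x * q ^ n‖ ≤ ‖x‖ := by
    rw [norm_mul, norm_pow]
    exact mul_le_of_le_one_right (norm_nonneg x) (pow_le_one₀ (norm_nonneg q) hq.le)
  have h_numerator : ‖qPochInf (x * q ^ n) q‖ ≤ Real.exp (‖x‖ / (1 - ‖q‖)) :=
    (norm_qPochInf_le hq _).trans (by gcongr)
  calc ‖q ^ n * qPochInf (x * q ^ n) q / qPoch q q n‖
      = ‖qPochInf (x * q ^ n) q‖ * ‖(qPoch q q n)⁻¹‖ * ‖q‖ ^ n := by
        rw [div_eq_mul_inv, norm_mul, norm_mul, norm_pow]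
        ring
    _ ≤ Real.exp (‖x‖ / (1 - ‖q‖)) * C * ‖q‖ ^ n := by
        gcongr
        exact hC n

lemma hasSum_qPochSeries (hq : ‖q‖ < 1) (x : ℂ) :
    HasSum (fun n : ℕ => q ^ n * qPochInf (x * q ^ n) q / qPoch q q n) (qPochSeries q x) := by
  obtain ⟨C, hC⟩ := exists_norm_inv_qPoch_le hq hq
  exact (Summable.of_norm_bounded ((summable_geometric_of_lt_one (norm_nonneg q) hq).mul_left _)
    (norm_qPochSeries_term_le hq hC x)).hasSum

lemma isBoundedUnder_norm_qPochSeries (hq : ‖q‖ < 1) (x₀ : ℂ) :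
    (𝓝 x₀).IsBoundedUnder (· ≤ ·) fun x => ‖qPochSeries q x‖ := by
  obtain ⟨C, hC⟩ := exists_norm_inv_qPoch_le hq hq
  have h_le : ∀ x, ‖qPochSeries q x‖ ≤ Real.exp (‖x‖ / (1 - ‖q‖)) * C * (1 - ‖q‖)⁻¹ := fun x =>
    tsum_of_norm_bounded ((hasSum_geometric_of_lt_one (norm_nonneg q) hq).mul_left _)
      (norm_qPochSeries_term_le hq hC x)
  have h_cont : Continuous fun x : ℂ => Real.exp (‖x‖ / (1 - ‖q‖)) * C * (1 - ‖q‖)⁻¹ := by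
    fun_prop
  exact (h_cont.tendsto x₀).isBoundedUnder_le.mono_le (.of_forall h_le)

lemma sum_range_qPochSeries_term_add (hq : ‖q‖ < 1) (x : ℂ) (N : ℕ) :
    ∑ n ∈ range (N + 1), (q ^ n * qPochInf (x * q ^ n) q / qPoch q q n
      + x * (q ^ n * qPochInf (q * x * q ^ n) q / qPoch q q n))
      = qPochInf (x * q ^ (N + 1)) q * (qPoch q q N)⁻¹ := by
  have h_shift : ∀ n, q * x * q ^ n = x * q ^ (n + 1) := fun n => by ring
  have h_peel : ∀ n, qPochInf (x * q ^ n) q = (1 - x * q ^ n) * qPochInf (x * q ^ (n + 1)) q :=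
    fun n => by rw [qPochInf_eq_one_sub_mul hq, mul_assoc x, ← pow_succ]
  simp only [h_shift]
  induction N with
  | zero =>
    rw [sum_range_one, h_peel 0, qPoch_zero]
    ring
  | succ N ih =>
    have h_factor := one_sub_mul_pow_ne_zero hq hq.le N
    have h_qPoch := qPoch_ne_zero hq hq.le N
    rw [sum_range_succ, ih, h_peel (N + 1), qPoch_succ]
    field_simp
    ring

lemma qPochSeries_eq_inv_sub (hq : ‖q‖ < 1) (x : ℂ) :
    qPochSeries q x = (qPochInf q q)⁻¹ - x * qPochSeries q (q * x) := by
  have h_sum := (hasSum_qPochSeries hq x).add ((hasSum_qPochSeries hq (q * x)).mul_left x)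
  have h_arg : Tendsto (fun N : ℕ => x * q ^ (N + 1)) atTop (𝓝 0) := by
    simpa using ((tendsto_add_atTop_iff_nat 1).mpr
      (tendsto_pow_atTop_nhds_zero_of_norm_lt_one hq)).const_mul x
  have h_limit := ((tendsto_qPochInf_nhds_zero hq).comp h_arg).mul (tendsto_inv_qPoch hq hq)
  have h_partial := (tendsto_add_atTop_iff_nat 1).mpr h_sum.tendsto_sum_nat
  simp only [sum_range_qPochSeries_term_add hq] at h_partial
  linear_combination tendsto_nhds_unique h_partial h_limit

theorem qPochSeries_eq_inv_mul_tsum (hq : ‖q‖ < 1) (x : ℂ) :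
    qPochSeries q x = (qPochInf q q)⁻¹ * ∑' n : ℕ, q ^ n.choose 2 * (-x) ^ n := by
  have h_eq : ∀ x, qPochSeries q x = (qPochInf q q)⁻¹ + -1 * x * qPochSeries q (q * x) := by
    simpa only [neg_mul, one_mul, ← sub_eq_add_neg] using qPochSeries_eq_inv_sub hq
  have h_expansion :=
    hasSum_of_forall_eq_add_mul hq h_eq (isBoundedUnder_norm_qPochSeries hq 0) x
  rw [← h_expansion.tsum_eq, tsum_mul_left, neg_one_mul]

theorem tsum_pow_div_qPoch_mul_qPoch (hq : ‖q‖ < 1) (k : ℕ) :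
    ∑' n : ℕ, q ^ n / (qPoch q q (n + k) * qPoch q q n)
      = 1 / qPochInf q q ^ 2 * ∑' n : ℕ, q ^ n.choose 2 * (-q ^ (k + 1)) ^ n := by
  have h_term : ∀ n, q ^ n / (qPoch q q (n + k) * qPoch q q n)
      = (qPochInf q q)⁻¹ * (q ^ n * qPochInf (q ^ (k + 1) * q ^ n) q / qPoch q q n) := fun n => by
    have h_qPoch := qPoch_ne_zero hq hq.le (n + k)
    have h_tail := qPochInf_ne_zero hq hq
    rw [← qPoch_mul_qPochInf_mul_pow hq q (n + k)] at h_tail ⊢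
    have h_arg : q ^ (k + 1) * q ^ n = q * q ^ (n + k) := by ring
    rw [h_arg]
    field_simp [right_ne_zero_of_mul h_tail]
  simp only [h_term]
  rw [tsum_mul_left, ← qPochSeries, qPochSeries_eq_inv_mul_tsum hq]
  ring

end QPochSeries

lemma two_mul_choose_two_add (n : ℕ) : 2 * n.choose 2 + n = n ^ 2 := by
  induction n with
  | zero => rfl
  | succ n ih =>
    rw [Nat.choose_succ_succ', Nat.choose_one_right]
    linarith

lemma sq_pow_choose_two_mul_pow {R : Type*} [CommRing R] (q : R) (k n : ℕ) :
    (q ^ 2) ^ n.choose 2 * (-(q ^ 2) ^ (k + 1)) ^ n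
      = (-1) ^ n * q ^ (n ^ 2 + n + 2 * k * n) := by
  have h_exponent : 2 * n.choose 2 + 2 * (k + 1) * n = n ^ 2 + n + 2 * k * n := by
    rw [← two_mul_choose_two_add n]
    ring
  rw [← h_exponent, neg_pow]
  ring

/-- `Σ_{n≥0} q^{2n}/((q^2;q^2)_{n+k} (q^2;q^2)_n)
    = (1/((q^2;q^2)_∞)^2) Σ_{n≥0} (−1)^n q^{n^2+n+2kn}`. -/
theorem statement5 (q : ℂ) (hq0 : 0 < ‖q‖) (hq1 : ‖q‖ < 1) (k : ℕ) :
    ∑' n : ℕ, q ^ (2 * n) / (qPoch (q ^ 2) (q ^ 2) (n + k) * qPoch (q ^ 2) (q ^ 2) n)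
      = 1 / (qPochInf (q ^ 2) (q ^ 2)) ^ 2 *
        ∑' n : ℕ, (-1 : ℂ) ^ n * q ^ (n ^ 2 + n + 2 * k * n) := by
  have hq_sq : ‖q ^ 2‖ < 1 := by
    rw [norm_pow]
    exact pow_lt_one₀ (norm_nonneg q) hq1 two_ne_zero
  simpa only [pow_mul q 2, sq_pow_choose_two_mul_pow] using tsum_pow_div_qPoch_mul_qPoch hq_sq k
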